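/- Let A' be an essential line arrangement of d' ≥ 2 lines in P^2 and let L be a generic line, i.e. a line not in A' passing through no intersection point of A' (so L meets the lines of A' in d' distinct points). Set A = A' ∪ {L}. Then τ(A) = τ(A') + d' and r(A) = r(A') + 1. -/

import Mathlib

open Classical MvPolynomial

variable {K : Type*} [Field K] [CharZero K] {ℓ : ℕ}

/-- A (central) hyperplane arrangement: a finite set of nonzero linear forms,
pairwise non-proportional. -/
def IsArrangement (A : Finset (MvPolynomial (Fin ℓ) K)) : Prop :=
  (∀ α ∈ A, α ≠ 0 ∧ α.IsHomogeneous 1) ∧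
    ∀ α ∈ A, ∀ β ∈ A, α ≠ β → ∀ c : K, α ≠ c • β

/-- The arrangement is essential: the common zero set of its forms is `{0}`. -/
def IsEssential (A : Finset (MvPolynomial (Fin ℓ) K)) : Prop :=
  ∀ v : Fin ℓ → K, (∀ α ∈ A, eval v α = 0) → v = 0

/-- The defining polynomial `Q(A)`. -/
noncomputable def Qpoly (A : Finset (MvPolynomial (Fin ℓ) K)) : MvPolynomial (Fin ℓ) K :=
  ∏ α ∈ A, α

/-- Apply a derivation `θ = Σ θ_j ∂_j` to a polynomial. -/
noncomputable def applyDer (θ : Fin ℓ → MvPolynomial (Fin ℓ) K)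
    (f : MvPolynomial (Fin ℓ) K) : MvPolynomial (Fin ℓ) K :=
  ∑ j, θ j * pderiv j f

/-- The minimal degree of a Jacobian relation `r(A)`. -/
noncomputable def mdr (A : Finset (MvPolynomial (Fin ℓ) K)) : ℕ :=
  sInf {r | ∃ θ : Fin ℓ → MvPolynomial (Fin ℓ) K, θ ≠ 0 ∧
    (∀ j, (θ j).IsHomogeneous r) ∧ applyDer θ (Qpoly A) = 0}

/-- The number of elements `|A^H|` of the restriction of `A` to `H`:
the number of distinct subspaces `H ∩ ker α_L`, `L ∈ A \ {H}`. -/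
noncomputable def restCard (A : Finset (MvPolynomial (Fin ℓ) K))
    (H : MvPolynomial (Fin ℓ) K) : ℕ :=
  ((A.erase H).image fun L => {v : Fin ℓ → K | eval v H = 0 ∧ eval v L = 0}).card

/-- The number `n_j(A)` of intersection points of multiplicity `j` of a line
arrangement `A` in `P^2`. An intersection point is encoded (bijectively) by the set
of lines of `A` passing through it, which has at least two elements. -/
noncomputable def nPoints (A : Finset (MvPolynomial (Fin 3) K)) (j : ℕ) : ℕ :=
  Set.ncard {T : Finset (MvPolynomial (Fin 3) K) |
    ∃ v : Fin 3 → K, v ≠ 0 ∧ T = A.filter (fun α => eval v α = 0) ∧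
      2 ≤ T.card ∧ T.card = j}

/-- The maximal multiplicity `m(A)` of an intersection point of `A`. -/
noncomputable def maxMult (A : Finset (MvPolynomial (Fin 3) K)) : ℕ :=
  sSup {j | 2 ≤ j ∧ nPoints A j ≠ 0}

/-- The global Tjurina number `τ(A) = Σ_{j ≥ 2} n_j(A)·(j−1)²` of a line arrangement. -/
noncomputable def tjurina (A : Finset (MvPolynomial (Fin 3) K)) : ℕ :=
  ∑ j ∈ Finset.range (A.card + 1), nPoints A j * (j - 1) ^ 2

/-- `τ(d,r)_max = (d−1)(d−r−1) + r² − C(2r−d+2, 2)`, for `d/2 ≤ r ≤ d−1`. -/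
def tauMax (d r : ℕ) : ℕ :=
  (d - 1) * (d - r - 1) + r ^ 2 - Nat.choose (2 * r - d + 2) 2

/-- A line arrangement `A` is maximal Tjurina of type `(d, r)` if it consists of `d`
lines, `r(A) = r` and `τ(A) = τ(d,r)_max`. -/
def IsMaxTjurina (A : Finset (MvPolynomial (Fin 3) K)) (d r : ℕ) : Prop :=
  A.card = d ∧ mdr A = r ∧ tjurina A = tauMax d r


section GenericLineHelpers

set_option linter.unusedSectionVars false

theorem gl_applyDer_mul (θ : Fin 3 → MvPolynomial (Fin 3) K) (f g : MvPolynomial (Fin 3) K) :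
    applyDer θ (f * g) = applyDer θ f * g + f * applyDer θ g := by
  simp only [applyDer, pderiv_mul, Fin.sum_univ_three]
  ring

theorem gl_applyDer_comb (θ η : Fin 3 → MvPolynomial (Fin 3) K) (a b f : MvPolynomial (Fin 3) K) :
    applyDer (fun j => a * θ j + b * η j) f = a * applyDer θ f + b * applyDer η f := by
  simp only [applyDer, Fin.sum_univ_three]
  ring

theorem gl_euler {f : MvPolynomial (Fin 3) K} {n : ℕ} (h : f.IsHomogeneous n) :
    applyDer (fun j => X j) f = (n : MvPolynomial (Fin 3) K) * f := by
  have := h.sum_X_mul_pderiv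
  rw [nsmul_eq_mul] at this
  exact this

/-- Coefficient vector of a linear form. -/
theorem gl_lin {α : MvPolynomial (Fin 3) K} (h : α.IsHomogeneous 1) :
    ∃ a : Fin 3 → K, (∀ j, pderiv j α = C (a j)) ∧ α = ∑ j, C (a j) * X j := by
  have h1 : ∀ j, pderiv j α = C (coeff 0 (pderiv j α)) := by
    intro j
    have := h.pderiv (i := j)
    rw [← totalDegree_zero_iff_isHomogeneous, totalDegree_eq_zero_iff_eq_C] at this
    exact this
  refine ⟨fun j => coeff 0 (pderiv j α), h1, ?_⟩
  have := h.sum_X_mul_pderiv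
  rw [one_smul] at this
  conv_lhs => rw [← this]
  refine Finset.sum_congr rfl fun j _ => ?_
  rw [mul_comm]
  congr 1
  exact h1 j

theorem gl_factor {L q : MvPolynomial (Fin 3) K} (hL0 : L ≠ 0) (hL : L.IsHomogeneous 1) {s : ℕ}
    (h : (L * q).IsHomogeneous s) :
    q = 0 ∨ ∃ t, s = t + 1 ∧ q.IsHomogeneous t := by
  let _ : GradedAlgebra (homogeneousSubmodule (Fin 3) K) := MvPolynomial.gradedAlgebra
  have hs : ((DirectSum.decompose (homogeneousSubmodule (Fin 3) K) (L * q) s :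
      homogeneousSubmodule (Fin 3) K s) : MvPolynomial (Fin 3) K) = L * q :=
    DirectSum.decompose_of_mem_same _ h
  rcases s with _ | t
  · left
    rw [DirectSum.coe_decompose_mul_of_left_mem_of_not_le (𝒜 := homogeneousSubmodule (Fin 3) K)
      (i := 1) (n := 0) hL (by norm_num)] at hs
    have := hs.symm
    simpa [hL0] using this
  · right
    refine ⟨t, rfl, ?_⟩
    rw [add_comm t 1, DirectSum.coe_decompose_mul_add_of_left_mem
      (𝒜 := homogeneousSubmodule (Fin 3) K) hL] at hs
    have := mul_left_cancel₀ hL0 hs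
    rw [← this]
    exact (DirectSum.decompose (homogeneousSubmodule (Fin 3) K) q t).2

theorem gl_dvd_lin {α β : MvPolynomial (Fin 3) K} (hα0 : α ≠ 0) (hα : α.IsHomogeneous 1)
    (hβ : β.IsHomogeneous 1) (h : α ∣ β) : ∃ c : K, β = c • α := by
  obtain ⟨q, rfl⟩ := h
  rcases gl_factor hα0 hα hβ with rfl | ⟨t, ht, hq⟩
  · exact ⟨0, by simp⟩
  · have : t = 0 := by omega
    subst this
    rw [← totalDegree_zero_iff_isHomogeneous, totalDegree_eq_zero_iff_eq_C] at hq
    exact ⟨coeff 0 q, by rw [hq]; simp [smul_eq_C_mul, mul_comm]⟩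

/-- Projection along a linear form. -/
theorem gl_proj {α : MvPolynomial (Fin 3) K} (hα0 : α ≠ 0) (hα : α.IsHomogeneous 1) :
    ∃ π : MvPolynomial (Fin 3) K →ₐ[K] MvPolynomial (Fin 3) K, π α = 0 ∧ (∀ p, α ∣ p - π p) ∧
      ∀ p n, p.IsHomogeneous n → (π p).IsHomogeneous n := by
  obtain ⟨a, -, ha⟩ := gl_lin hα
  obtain ⟨k, hk⟩ : ∃ k, a k ≠ 0 := by
    by_contra! hc
    exact hα0 (by rw [ha]; simp [hc])
  let π : MvPolynomial (Fin 3) K →ₐ[K] MvPolynomial (Fin 3) K :=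
    aeval (fun i => X i - C (if i = k then (a k)⁻¹ else 0) * α)
  refine ⟨π, ?_, ?_, ?_⟩
  · have h1 : π α = ∑ j, C (a j) * (X j - C (if j = k then (a k)⁻¹ else 0) * α) := by
      conv_lhs => rw [ha]
      rw [map_sum]
      refine Finset.sum_congr rfl fun j _ => ?_
      rw [map_mul]
      congr 1
      · exact (π.commutes (a j))
      · simp [π]
    have h2 : ∑ j, C (a j) * (C (if j = k then (a k)⁻¹ else 0) * α) = α := by
      rw [Finset.sum_eq_single k]
      · rw [if_pos rfl, ← mul_assoc, ← C_mul, mul_inv_cancel₀ hk]; simp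
      · intro j _ hj; simp [hj]
      · simp
    simp only [mul_sub, Finset.sum_sub_distrib] at h1
    rw [h1, h2, ← ha, sub_self]
  · intro p
    induction p using MvPolynomial.induction_on with
    | C c => 
      have : π (C c) = C c := π.commutes c
      simp [this]
    | add p q hp hq =>
      rw [map_add, add_sub_add_comm]
      exact dvd_add hp hq
    | mul_X p i hp =>
      have h1 : π (X i) = X i - C (if i = k then (a k)⁻¹ else 0) * α := by simp [π]
      rw [map_mul, h1]
      have : p * X i - π p * (X i - C (if i = k then (a k)⁻¹ else 0) * α) =
        (p - π p) * X i + α * (π p * C (if i = k then (a k)⁻¹ else 0)) := by ring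
      rw [this]
      exact dvd_add (Dvd.dvd.mul_right hp _) (dvd_mul_right _ _)
  · intro p n hp
    have := hp.aeval (fun i => X i - C (if i = k then (a k)⁻¹ else 0) * α) (n := 1) (fun i =>
      (isHomogeneous_X K i).sub (hα.C_mul _))
    rw [one_mul] at this
    exact this

theorem gl_prime {α : MvPolynomial (Fin 3) K} (hα0 : α ≠ 0) (hα : α.IsHomogeneous 1) :
    Prime α := by
  obtain ⟨π, h0, hd, -⟩ := gl_proj hα0 hα
  have hk : ∀ p, π p = 0 ↔ α ∣ p := by
    intro p
    constructor
    · intro h; simpa [h] using hd p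
    · rintro ⟨q, rfl⟩; simp [h0]
  refine ⟨hα0, ?_, ?_⟩
  · intro hu
    have := (hk 1).2 (hu.dvd)
    simp at this
  · intro p q h
    rw [← hk, map_mul, mul_eq_zero, hk, hk] at h
    exact h

theorem gl_exists_point {α β : MvPolynomial (Fin 3) K} (hα : α.IsHomogeneous 1)
    (hβ : β.IsHomogeneous 1) : ∃ w : Fin 3 → K, w ≠ 0 ∧ eval w α = 0 ∧ eval w β = 0 := by
  obtain ⟨a, -, ha⟩ := gl_lin hα
  obtain ⟨b, -, hb⟩ := gl_lin hβ
  let f : (Fin 3 → K) →ₗ[K] (Fin 2 → K) := Matrix.toLin' (Matrix.of ![a, b])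
  have hf : LinearMap.ker f ≠ ⊥ := f.ker_ne_bot_of_finrank_lt (by simp)
  obtain ⟨w, hw, hw0⟩ := (Submodule.ne_bot_iff _).1 hf
  have hw' : f w = 0 := hw
  have h0 := congrFun hw' 0
  have h1 := congrFun hw' 1
  simp [f, Matrix.mulVec, dotProduct] at h0 h1
  refine ⟨w, hw0, ?_, ?_⟩
  · rw [ha]; simpa using h0
  · rw [hb]; simpa using h1

theorem gl_cross_one (n a : Fin 3 → K) (m : Fin 3 → K)
    (hm : m = ![n 1 * a 2 - n 2 * a 1, n 2 * a 0 - n 0 * a 2, n 0 * a 1 - n 1 * a 0])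
    (u : Fin 3 → MvPolynomial (Fin 3) K) (p : MvPolynomial (Fin 3) K)
    (hn : p ∣ ∑ i, C (n i) * u i) (ha : p ∣ ∑ i, C (a i) * u i) (i j : Fin 3) :
    p ∣ C (m i) * u j - C (m j) * u i := by
  obtain ⟨q, hq⟩ := hn
  obtain ⟨r, hr⟩ := ha
  simp only [Fin.sum_univ_three] at hq hr
  have h01 : p ∣ C (m 0) * u 1 - C (m 1) * u 0 :=
    ⟨C (a 2) * q - C (n 2) * r, by
      subst hm; simp; linear_combination C (a 2) * hq - C (n 2) * hr⟩
  have h12 : p ∣ C (m 1) * u 2 - C (m 2) * u 1 :=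
    ⟨C (a 0) * q - C (n 0) * r, by
      subst hm; simp; linear_combination C (a 0) * hq - C (n 0) * hr⟩
  have h20 : p ∣ C (m 2) * u 0 - C (m 0) * u 2 :=
    ⟨C (a 1) * q - C (n 1) * r, by
      subst hm; simp; linear_combination C (a 1) * hq - C (n 1) * hr⟩
  fin_cases i <;> fin_cases j <;> first
    | (simp; done)
    | exact h01
    | exact h12
    | exact h20
    | exact (dvd_sub_comm).1 h01
    | exact (dvd_sub_comm).1 h12
    | exact (dvd_sub_comm).1 h20

theorem gl_cross (n a : Fin 3 → K) (hna : ∀ c : K, a ≠ c • n) (hn0 : n ≠ 0)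
    (u v : Fin 3 → MvPolynomial (Fin 3) K) (p : MvPolynomial (Fin 3) K)
    (hnu : p ∣ ∑ i, C (n i) * u i) (hau : p ∣ ∑ i, C (a i) * u i)
    (hnv : p ∣ ∑ i, C (n i) * v i) (hav : p ∣ ∑ i, C (a i) * v i) (i j : Fin 3) :
    p ∣ u i * v j - u j * v i := by
  obtain ⟨m, hm⟩ : ∃ m : Fin 3 → K,
    m = ![n 1 * a 2 - n 2 * a 1, n 2 * a 0 - n 0 * a 2, n 0 * a 1 - n 1 * a 0] := ⟨_, rfl⟩
  have hm0 : ∃ k, m k ≠ 0 := by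
    by_contra! hc
    have e0 := hc 0
    have e1 := hc 1
    have e2 := hc 2
    simp [hm] at e0 e1 e2
    obtain ⟨k, hk⟩ := Function.ne_iff.1 hn0
    simp at hk
    apply hna (a k / n k)
    funext i
    simp only [Pi.smul_apply, smul_eq_mul]
    field_simp
    fin_cases k <;> fin_cases i <;> simp <;> simp at hk <;> first
      | linear_combination e0
      | linear_combination e1
      | linear_combination e2
      | linear_combination -e0
      | linear_combination -e1
      | linear_combination -e2
  obtain ⟨k, hk⟩ := hm0
  have hu := gl_cross_one n a m hm u p hnu hau
  have hv := gl_cross_one n a m hm v p hnv hav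
  have h1 : p ∣ C (m k) * (u i * v j - u j * v i) := by
    have : C (m k) * (u i * v j - u j * v i) = (C (m k) * u i - C (m i) * u k) * v j
      - (C (m k) * u j - C (m j) * u k) * v i + u k * (C (m i) * v j - C (m j) * v i) := by ring
    rw [this]
    exact dvd_add (dvd_sub (Dvd.dvd.mul_right (hu _ _) _) (Dvd.dvd.mul_right (hu _ _) _))
      (Dvd.dvd.mul_left (hv _ _) _)
  have h2 : u i * v j - u j * v i = C (m k)⁻¹ * (C (m k) * (u i * v j - u j * v i)) := by
    rw [← mul_assoc, ← C_mul, inv_mul_cancel₀ hk]; simp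
  rw [h2]
  exact Dvd.dvd.mul_left h1 _

theorem gl_Q_hom {A : Finset (MvPolynomial (Fin 3) K)} (hA : ∀ α ∈ A, α ≠ 0 ∧ α.IsHomogeneous 1) :
    (Qpoly A).IsHomogeneous A.card := by
  have := IsHomogeneous.prod A (fun α => α) (fun _ => 1) (fun α h => (hA α h).2)
  simpa [Qpoly] using this

theorem gl_Q_ne {A : Finset (MvPolynomial (Fin 3) K)} (hA : IsArrangement A) : Qpoly A ≠ 0 :=
  Finset.prod_ne_zero_iff.2 fun α h => (hA.1 α h).1

theorem gl_tangent {A : Finset (MvPolynomial (Fin 3) K)} (hA : IsArrangement A)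
    (θ : Fin 3 → MvPolynomial (Fin 3) K) (hθ : applyDer θ (Qpoly A) = 0)
    {α : MvPolynomial (Fin 3) K} (hα : α ∈ A) : α ∣ applyDer θ α := by
  have hp := gl_prime (hA.1 α hα).1 (hA.1 α hα).2
  have hQ : Qpoly A = α * ∏ β ∈ A.erase α, β := (Finset.mul_prod_erase A (fun β => β) hα).symm
  rw [hQ, gl_applyDer_mul] at hθ
  have h1 : α ∣ applyDer θ α * ∏ β ∈ A.erase α, β :=
    ⟨-applyDer θ (∏ β ∈ A.erase α, β), by linear_combination hθ⟩
  rcases hp.dvd_or_dvd h1 with h | h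
  · exact h
  · exfalso
    obtain ⟨β, hβ, hd⟩ := (hp.dvd_finsetProd_iff _).1 h
    rw [Finset.mem_erase] at hβ
    obtain ⟨c, hc⟩ := gl_dvd_lin (hA.1 α hα).1 (hA.1 α hα).2 (hA.1 β hβ.2).2 hd
    exact hA.2 β hβ.2 α hα hβ.1 c hc

theorem gl_upper {A : Finset (MvPolynomial (Fin 3) K)} (hA : IsArrangement A) (hd : 2 ≤ A.card) :
    ∃ θ : Fin 3 → MvPolynomial (Fin 3) K, θ ≠ 0 ∧
    (∀ j, (θ j).IsHomogeneous (A.card - 2)) ∧ applyDer θ (Qpoly A) = 0 := by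
  obtain ⟨α, hα, β, hβ, hne⟩ := Finset.one_lt_card.1 hd
  obtain ⟨w, hw0, hwα, hwβ⟩ := gl_exists_point (hA.1 α hα).2 (hA.1 β hβ).2
  have hβ' : β ∈ A.erase α := Finset.mem_erase.2 ⟨hne.symm, hβ⟩
  obtain ⟨B, hB⟩ : ∃ B, B = (A.erase α).erase β := ⟨_, rfl⟩
  have hBA : ∀ γ ∈ B, γ ∈ A := fun γ h =>
    Finset.mem_of_mem_erase (Finset.mem_of_mem_erase (hB ▸ h))
  have hBc : B.card = A.card - 2 := by
    rw [hB, Finset.card_erase_of_mem hβ', Finset.card_erase_of_mem hα]; omega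
  obtain ⟨g, hg⟩ : ∃ g, g = Qpoly B := ⟨_, rfl⟩
  have hgh : g.IsHomogeneous (A.card - 2) := by
    rw [hg, ← hBc]; exact gl_Q_hom fun γ h => hA.1 γ (hBA γ h)
  have hg0 : g ≠ 0 := by
    rw [hg]; exact Finset.prod_ne_zero_iff.2 fun γ h => (hA.1 γ (hBA γ h)).1
  have hQ : Qpoly A = α * (β * g) := by
    rw [hg, hB]
    unfold Qpoly
    rw [Finset.mul_prod_erase (A.erase α) (fun β => β) hβ', Finset.mul_prod_erase A (fun β => β) hα]
  have hlin : ∀ γ : MvPolynomial (Fin 3) K, γ.IsHomogeneous 1 → eval w γ = 0 →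
      applyDer (fun j => C (w j)) γ = 0 := by
    intro γ hγ hwγ
    obtain ⟨a, ha, ha'⟩ := gl_lin hγ
    rw [ha'] at hwγ
    simp only [applyDer, ha]
    simp only [← C_mul, ← map_sum]
    rw [← C_0]
    congr 1
    simpa [mul_comm] using hwγ
  have hα1 := hlin α (hA.1 α hα).2 hwα
  have hβ1 := hlin β (hA.1 β hβ).2 hwβ
  obtain ⟨D, hD⟩ : ∃ D, D = applyDer (fun j => C (w j)) g := ⟨_, rfl⟩
  have hDQ : applyDer (fun j => C (w j)) (Qpoly A) = α * (β * D) := by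
    rw [hQ, gl_applyDer_mul, gl_applyDer_mul, hα1, hβ1, hD]; ring
  have hc0 : (A.card : K) ≠ 0 := by
    have : A.card ≠ 0 := by omega
    exact_mod_cast this
  have hcc : C ((A.card : K)⁻¹) * (A.card : MvPolynomial (Fin 3) K) = 1 := by
    have : (A.card : MvPolynomial (Fin 3) K) = C (A.card : K) := by simp
    rw [this, ← C_mul, inv_mul_cancel₀ hc0, C_1]
  refine ⟨fun j => g * C (w j) + (-(C ((A.card : K)⁻¹) * D)) * X j, ?_, ?_, ?_⟩
  · intro h0
    have h1 := gl_applyDer_comb (fun j => C (w j)) (fun j => X j) g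
      (-(C ((A.card : K)⁻¹) * D)) α
    rw [h0, hα1, gl_euler (hA.1 α hα).2] at h1
    have h2 : applyDer (0 : Fin 3 → MvPolynomial (Fin 3) K) α = 0 := by simp [applyDer]
    rw [h2] at h1
    have hD0 : C ((A.card : K)⁻¹) * D = 0 := by
      have : (C ((A.card : K)⁻¹) * D) * α = 0 := by
        push_cast at h1
        linear_combination h1
      exact (mul_eq_zero.1 this).resolve_right (hA.1 α hα).1
    obtain ⟨k, hk⟩ := Function.ne_iff.1 hw0
    have h3 := congrFun h0 k
    simp [hD0, hg0] at h3
    exact hk h3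
  · intro j
    refine IsHomogeneous.add ?_ ?_
    · simpa using hgh.mul (isHomogeneous_C (Fin 3) (w j))
    · have hDh : (D * X j).IsHomogeneous (A.card - 2) := by
        rw [hD]
        simp only [applyDer, Finset.sum_mul]
        refine IsHomogeneous.sum _ _ _ fun i _ => ?_
        rw [mul_assoc]
        refine IsHomogeneous.C_mul ?_ _
        rcases hn : A.card - 2 with _ | n
        · rw [hn] at hgh
          rw [← totalDegree_zero_iff_isHomogeneous, totalDegree_eq_zero_iff_eq_C] at hgh
          rw [hgh]
          simp [isHomogeneous_zero]
        · rw [hn] at hgh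
          exact (hgh.pderiv).mul (isHomogeneous_X K j)
      have := (hDh.C_mul ((A.card : K)⁻¹)).neg
      rw [← mul_assoc, ← neg_mul] at this
      exact this
  · rw [gl_applyDer_comb, hDQ, gl_euler (gl_Q_hom hA.1), hQ]
    linear_combination (-(α * β * g * D)) * hcc

theorem gl_step_up {A : Finset (MvPolynomial (Fin 3) K)} (hA' : IsArrangement A) (hd : 2 ≤ A.card)
    (L : MvPolynomial (Fin 3) K) (hL : L ∉ A) (hA : IsArrangement (insert L A)) (r : ℕ)
    (h : ∃ θ : Fin 3 → MvPolynomial (Fin 3) K, θ ≠ 0 ∧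
      (∀ j, (θ j).IsHomogeneous r) ∧ applyDer θ (Qpoly A) = 0) :
    ∃ θ : Fin 3 → MvPolynomial (Fin 3) K, θ ≠ 0 ∧
      (∀ j, (θ j).IsHomogeneous (r + 1)) ∧ applyDer θ (Qpoly (insert L A)) = 0 := by
  obtain ⟨θ, h0, hh, hk⟩ := h
  have hL1 := hA.1 L (Finset.mem_insert_self _ _)
  have hQ : Qpoly (insert L A) = L * Qpoly A := Finset.prod_insert hL
  have hQh := gl_Q_hom hA.1
  rw [Finset.card_insert_of_notMem hL] at hQh
  have hcc : C (((A.card + 1 : ℕ) : K)⁻¹) * ((A.card + 1 : ℕ) : MvPolynomial (Fin 3) K) = 1 := by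
    have hc0 : ((A.card + 1 : ℕ) : K) ≠ 0 := by exact_mod_cast Nat.succ_ne_zero A.card
    have : ((A.card + 1 : ℕ) : MvPolynomial (Fin 3) K) = C ((A.card + 1 : ℕ) : K) := by simp
    rw [this, ← C_mul, inv_mul_cancel₀ hc0, C_1]
  refine ⟨fun j => L * θ j + (-(C (((A.card + 1 : ℕ) : K)⁻¹) * applyDer θ L)) * X j, ?_, ?_, ?_⟩
  · intro hz
    have h1 := gl_applyDer_comb θ (fun j => X j) L
      (-(C (((A.card + 1 : ℕ) : K)⁻¹) * applyDer θ L)) (Qpoly A)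
    have h2 : applyDer (0 : Fin 3 → MvPolynomial (Fin 3) K) (Qpoly A) = 0 := by simp [applyDer]
    rw [hz, h2, hk, gl_euler (gl_Q_hom hA'.1)] at h1
    have h3 : (C (((A.card + 1 : ℕ) : K)⁻¹) * applyDer θ L) *
        ((A.card : MvPolynomial (Fin 3) K) * Qpoly A) = 0 := by linear_combination h1
    have hc : (A.card : MvPolynomial (Fin 3) K) ≠ 0 := by
      have : A.card ≠ 0 := by omega
      exact_mod_cast this
    have h4 := (mul_eq_zero.1 h3).resolve_right (mul_ne_zero hc (gl_Q_ne hA'))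
    apply h0
    funext j
    have h5 := congrFun hz j
    simp only [h4, neg_zero, zero_mul, add_zero, Pi.zero_apply] at h5
    exact (mul_eq_zero.1 h5).resolve_left hL1.1
  · intro j
    refine IsHomogeneous.add ?_ ?_
    · rw [add_comm r 1]; exact hL1.2.mul (hh j)
    · refine IsHomogeneous.mul ?_ (isHomogeneous_X K j)
      refine (IsHomogeneous.C_mul ?_ _).neg
      refine IsHomogeneous.sum _ _ _ fun i _ => ?_
      simpa using (hh i).mul (hL1.2.pderiv (i := i))
  · rw [gl_applyDer_comb, gl_euler hQh, hQ, gl_applyDer_mul, hk]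
    linear_combination (-(applyDer θ L * L * Qpoly A)) * hcc

theorem gl_step_down {A : Finset (MvPolynomial (Fin 3) K)} (hA' : IsArrangement A)
    (hd : 2 ≤ A.card)
    (L : MvPolynomial (Fin 3) K) (hL : L ∉ A) (hA : IsArrangement (insert L A))
    (hgen : ∀ w : Fin 3 → K, w ≠ 0 → eval w L = 0 →
      (A.filter fun α => eval w α = 0).card ≤ 1) (s : ℕ)
    (h : ∃ θ : Fin 3 → MvPolynomial (Fin 3) K, θ ≠ 0 ∧
      (∀ j, (θ j).IsHomogeneous s) ∧ applyDer θ (Qpoly (insert L A)) = 0) :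
    ∃ t, t + 1 ≤ s ∧ ∃ θ : Fin 3 → MvPolynomial (Fin 3) K, θ ≠ 0 ∧
      (∀ j, (θ j).IsHomogeneous t) ∧ applyDer θ (Qpoly A) = 0 := by
  obtain ⟨θ, h0, hh, hk⟩ := h
  have hLm := Finset.mem_insert_self L A
  have hL1 := hA.1 L hLm
  have hQ : Qpoly (insert L A) = L * Qpoly A := Finset.prod_insert hL
  have hQ0 := gl_Q_ne hA'
  obtain ⟨q, hq⟩ := gl_tangent hA θ hk hLm
  have hqX : ∀ j, (q * X j).IsHomogeneous s := by
    intro j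
    have hs : (L * q).IsHomogeneous s := by
      rw [← hq]
      refine IsHomogeneous.sum _ _ _ fun i _ => ?_
      simpa using (hh i).mul (hL1.2.pderiv (i := i))
    rcases gl_factor hL1.1 hL1.2 hs with rfl | ⟨t, rfl, ht⟩
    · simp [isHomogeneous_zero]
    · exact ht.mul (isHomogeneous_X K j)
  have hkf : applyDer θ (Qpoly A) = - (q * Qpoly A) := by
    rw [hQ, gl_applyDer_mul, hq] at hk
    apply mul_left_cancel₀ hL1.1
    linear_combination hk
  have hcA : (A.card : MvPolynomial (Fin 3) K) ≠ 0 := by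
    have : A.card ≠ 0 := by omega
    exact_mod_cast this
  have hcc : C ((A.card : K)⁻¹) * (A.card : MvPolynomial (Fin 3) K) = 1 := by
    have hc0 : (A.card : K) ≠ 0 := by
      have : A.card ≠ 0 := by omega
      exact_mod_cast this
    have : (A.card : MvPolynomial (Fin 3) K) = C (A.card : K) := by simp
    rw [this, ← C_mul, inv_mul_cancel₀ hc0, C_1]
  -- the corrected derivation
  obtain ⟨ψ, hψ⟩ : ∃ ψ : Fin 3 → MvPolynomial (Fin 3) K,
    ψ = fun j => 1 * θ j + (C ((A.card : K)⁻¹) * q) * X j := ⟨_, rfl⟩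
  have hψh : ∀ j, (ψ j).IsHomogeneous s := by
    intro j
    rw [hψ]
    refine IsHomogeneous.add ?_ ?_
    · simpa using hh j
    · rw [mul_assoc]; exact (hqX j).C_mul _
  have hψk : applyDer ψ (Qpoly A) = 0 := by
    rw [hψ, gl_applyDer_comb, hkf, gl_euler (gl_Q_hom hA'.1)]
    linear_combination (q * Qpoly A) * hcc
  have hψL : applyDer ψ L = L * (q + C ((A.card : K)⁻¹) * q) := by
    rw [hψ, gl_applyDer_comb, hq, gl_euler hL1.2]
    push_cast
    ring
  have hψ0 : ψ ≠ 0 := by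
    intro hz
    have h2 : applyDer (0 : Fin 3 → MvPolynomial (Fin 3) K) L = 0 := by simp [applyDer]
    rw [hz, h2] at hψL
    have h3 := (mul_eq_zero.1 hψL.symm).resolve_left hL1.1
    have h4 : ((A.card + 1 : ℕ) : MvPolynomial (Fin 3) K) * q = 0 := by
      push_cast
      linear_combination (A.card : MvPolynomial (Fin 3) K) * h3 - q * hcc
    have h5 : q = 0 := (mul_eq_zero.1 h4).resolve_left (by exact_mod_cast Nat.succ_ne_zero A.card)
    apply h0
    funext j
    have h6 := congrFun hz j
    simpa [hψ, h5] using h6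
  -- restriction to the line
  obtain ⟨π, hπL, hπd, hπh⟩ := gl_proj hL1.1 hL1.2
  have hker : ∀ p, π p = 0 → L ∣ p := by
    intro p hp; simpa [hp] using hπd p
  have hπC : ∀ c : K, π (C c) = C c := π.commutes
  have hAm : ∀ α ∈ A, α ∈ insert L A := fun α h => Finset.mem_insert_of_mem h
  have hne : ∀ α ∈ A, α ≠ L := fun α h e => hL (e ▸ h)
  have hπ0 : ∀ α ∈ A, π α ≠ 0 := by
    intro α hα hz
    obtain ⟨c, hc⟩ := gl_dvd_lin hL1.1 hL1.2 (hA'.1 α hα).2 (hker α hz)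
    exact hA.2 α (hAm α hα) L hLm (hne α hα) c hc
  have hπ1 : ∀ α ∈ A, (π α).IsHomogeneous 1 := fun α hα => hπh α 1 (hA'.1 α hα).2
  have hπp : ∀ α ∈ A, Prime (π α) := fun α hα => gl_prime (hπ0 α hα) (hπ1 α hα)
  have hrel : ((A : Finset (MvPolynomial (Fin 3) K)) : Set (MvPolynomial (Fin 3) K)).Pairwise
      (Function.onFun IsRelPrime (fun α => π α)) := by
    intro α hα β hβ hab
    refine (hπp α hα).irreducible.isRelPrime_iff_not_dvd.2 fun hdv => ?_
    obtain ⟨c, hc⟩ := gl_dvd_lin (hπ0 α hα) (hπ1 α hα) (hπ1 β hβ) hdv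
    have h1 : π (β - c • α) = 0 := by rw [map_sub, map_smul, hc, sub_self]
    obtain ⟨e, he⟩ := hker _ h1
    obtain ⟨w, hw0, hwL, hwα⟩ := gl_exists_point hL1.2 (hA'.1 α hα).2
    have hwβ : eval w β = 0 := by
      have := congrArg (eval w) he
      simpa [hwL, hwα, smul_eval] using this
    have h2 := hgen w hw0 hwL
    have h3 := Finset.card_le_one.1 h2 α (by simpa using ⟨hα, hwα⟩) β (by simpa using ⟨hβ, hwβ⟩)
    exact hab h3
  obtain ⟨n, hn, hn'⟩ := gl_lin hL1.2
  have hn0 : n ≠ 0 := by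
    rintro rfl
    exact hL1.1 (by rw [hn']; simp)
  have hcr : ∀ i j, (∏ α ∈ A, π α) ∣ π (X i) * π (ψ j) - π (X j) * π (ψ i) := by
    intro i j
    refine Finset.prod_dvd_of_isRelPrime hrel fun α hα => ?_
    obtain ⟨a, ha, ha'⟩ := gl_lin (hA'.1 α hα).2
    have hX : ∀ (b : Fin 3 → K) (u : Fin 3 → MvPolynomial (Fin 3) K),
        ∑ k, C (b k) * π (u k) = π (∑ k, C (b k) * u k) := by
      intro b u; simp only [map_sum, map_mul, hπC]
    have hder : ∀ (β : MvPolynomial (Fin 3) K) (b : Fin 3 → K), (∀ j, pderiv j β = C (b j)) →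
        ∑ k, C (b k) * ψ k = applyDer ψ β := by
      intro β b hb
      simp only [applyDer, hb, mul_comm]
    refine gl_cross n a ?_ hn0 (fun k => π (X k)) (fun k => π (ψ k)) (π α) ?_ ?_ ?_ ?_ i j
    · intro c hc
      refine hA.2 α (hAm α hα) L hLm (hne α hα) c ?_
      rw [ha', hn', hc, Finset.smul_sum]
      refine Finset.sum_congr rfl fun k _ => ?_
      simp [smul_eq_C_mul, mul_assoc]
    · rw [hX, ← hn', hπL]; exact dvd_zero _
    · rw [hX, ← ha']
    · rw [hX, hder L n hn, hψL, map_mul, hπL, zero_mul]; exact dvd_zero _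
    · rw [hX, hder α a ha]
      exact map_dvd π (gl_tangent hA' ψ hψk hα)
  have hπQ : π (Qpoly A) = ∏ α ∈ A, π α := by simp [Qpoly]
  have hπQ0 : π (Qpoly A) ≠ 0 := by rw [hπQ]; exact Finset.prod_ne_zero_iff.2 hπ0
  by_cases hP : ∀ i j, π (X i) * π (ψ j) - π (X j) * π (ψ i) = 0
  · -- the restriction vanishes: divide by L
    have hz : ∀ j, π (ψ j) = 0 := by
      intro j
      have e1 := congrArg π hψk
      have e2 := congrArg π (gl_euler (gl_Q_hom hA'.1))
      simp only [applyDer, Fin.sum_univ_three, map_add, map_mul, map_zero, map_natCast] at e1 e2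
      have e3 : π (ψ j) * ((A.card : MvPolynomial (Fin 3) K) * π (Qpoly A)) = 0 := by
        linear_combination (π (X j)) * e1 - (π (ψ j)) * e2 + π (pderiv 0 (Qpoly A)) * hP 0 j
          + π (pderiv 1 (Qpoly A)) * hP 1 j + π (pderiv 2 (Qpoly A)) * hP 2 j
      exact (mul_eq_zero.1 e3).resolve_right (mul_ne_zero hcA hπQ0)
    choose η hη using fun j => hker _ (hz j)
    have hηk : applyDer η (Qpoly A) = 0 := by
      apply mul_left_cancel₀ hL1.1
      rw [mul_zero, ← hψk]
      simp only [applyDer, hη, Finset.mul_sum, mul_assoc]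
    have hη0 : η ≠ 0 := by
      rintro rfl
      exact hψ0 (by funext j; simp [hη j])
    have hfac := fun j => gl_factor hL1.1 hL1.2 (hη j ▸ hψh j)
    obtain ⟨k, hk0⟩ := Function.ne_iff.1 hη0
    rcases (hfac k) with h1 | ⟨t, rfl, -⟩
    · exact absurd h1 hk0
    · refine ⟨t, le_rfl, η, hη0, fun j => ?_, hηk⟩
      rcases hfac j with h1 | ⟨t', ht', h2⟩
      · rw [h1]; exact isHomogeneous_zero _ _ _
      · have : t = t' := by omega
        rw [this]; exact h2
  · push Not at hP
    obtain ⟨i, j, hij⟩ := hP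
    refine ⟨A.card - 2, ?_, gl_upper hA' hd⟩
    have hPh : (π (X i) * π (ψ j) - π (X j) * π (ψ i)).IsHomogeneous (1 + s) :=
      ((hπh _ 1 (isHomogeneous_X K i)).mul (hπh _ s (hψh j))).sub
        ((hπh _ 1 (isHomogeneous_X K j)).mul (hπh _ s (hψh i)))
    have hQh := hπh _ _ (gl_Q_hom hA'.1)
    obtain ⟨c, hc⟩ := hcr i j
    rw [← hπQ] at hc
    have hc0 : c ≠ 0 := by rintro rfl; exact hij (by rw [hc, mul_zero])
    have h1 := hPh.totalDegree hij
    rw [hc, totalDegree_mul_of_isDomain hπQ0 hc0, hQh.totalDegree hπQ0] at h1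
    omega

theorem gl_mdr {A : Finset (MvPolynomial (Fin 3) K)} (hA' : IsArrangement A)
    (hd : 2 ≤ A.card)
    (L : MvPolynomial (Fin 3) K) (hL : L ∉ A) (hA : IsArrangement (insert L A))
    (hgen : ∀ w : Fin 3 → K, w ≠ 0 → eval w L = 0 →
      (A.filter fun α => eval w α = 0).card ≤ 1) :
    mdr (insert L A) = mdr A + 1 := by
  have h1 := Nat.sInf_mem (s := {r | ∃ θ : Fin 3 → MvPolynomial (Fin 3) K, θ ≠ 0 ∧
    (∀ j, (θ j).IsHomogeneous r) ∧ applyDer θ (Qpoly A) = 0}) ⟨_, gl_upper hA' hd⟩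
  have h2 := gl_step_up hA' hd L hL hA _ h1
  apply le_antisymm
  · exact Nat.sInf_le h2
  · have h3 := Nat.sInf_mem (s := {r | ∃ θ : Fin 3 → MvPolynomial (Fin 3) K, θ ≠ 0 ∧
      (∀ j, (θ j).IsHomogeneous r) ∧ applyDer θ (Qpoly (insert L A)) = 0}) ⟨_, h2⟩
    obtain ⟨t, ht, h4⟩ := gl_step_down hA' hd L hL hA hgen _ h3
    exact le_trans (Nat.succ_le_succ (Nat.sInf_le h4)) ht

/-- Intersection points, as a finset of flats. -/
noncomputable def glPts (A : Finset (MvPolynomial (Fin 3) K)) :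
    Finset (Finset (MvPolynomial (Fin 3) K)) :=
  A.powerset.filter fun T => ∃ v : Fin 3 → K, v ≠ 0 ∧ T = A.filter (fun α => eval v α = 0) ∧
    2 ≤ T.card

theorem gl_mem_pts {A T : Finset (MvPolynomial (Fin 3) K)} : T ∈ glPts A ↔
    ∃ v : Fin 3 → K, v ≠ 0 ∧ T = A.filter (fun α => eval v α = 0) ∧ 2 ≤ T.card := by
  unfold glPts
  rw [Finset.mem_filter, Finset.mem_powerset]
  constructor
  · exact fun h => h.2
  · rintro ⟨v, h0, rfl, h2⟩
    exact ⟨Finset.filter_subset _ _, v, h0, rfl, h2⟩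

theorem gl_tjurina (A : Finset (MvPolynomial (Fin 3) K)) :
    tjurina A = ∑ T ∈ glPts A, (T.card - 1) ^ 2 := by
  have hn : ∀ j, nPoints A j = ((glPts A).filter fun T => T.card = j).card := by
    intro j
    unfold nPoints
    rw [← Set.ncard_coe_finset]
    congr 1
    ext T
    simp only [Set.mem_ofPred_eq, Finset.coe_filter, gl_mem_pts]
    constructor
    · rintro ⟨v, h0, h1, h2, h3⟩; exact ⟨⟨v, h0, h1, h2⟩, h3⟩
    · rintro ⟨⟨v, h0, h1, h2⟩, h3⟩; exact ⟨v, h0, h1, h2, h3⟩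
  unfold tjurina
  rw [← Finset.sum_fiberwise_of_maps_to (s := glPts A) (t := Finset.range (A.card + 1))
    (g := fun T => T.card)]
  · refine Finset.sum_congr rfl fun j _ => ?_
    rw [hn, Finset.sum_congr rfl (g := fun _ => (j - 1) ^ 2), Finset.sum_const, smul_eq_mul]
    intro T hT
    rw [(Finset.mem_filter.1 hT).2]
  · intro T hT
    obtain ⟨v, -, h, -⟩ := gl_mem_pts.1 hT
    rw [Finset.mem_range, Nat.lt_succ_iff, h]
    exact Finset.card_filter_le _ _

theorem gl_tau {A : Finset (MvPolynomial (Fin 3) K)} 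
    (L : MvPolynomial (Fin 3) K) (hL : L ∉ A) (hA : IsArrangement (insert L A))
    (hgen : ∀ w : Fin 3 → K, w ≠ 0 → eval w L = 0 →
      (A.filter fun α => eval w α = 0).card ≤ 1) :
    tjurina (insert L A) = tjurina A + A.card := by
  have hLm := Finset.mem_insert_self L A
  have hL1 := hA.1 L hLm
  have hAL : ∀ α ∈ A, α ≠ L := fun α h e => hL (e ▸ h)
  have key : glPts (insert L A) = glPts A ∪ A.image (fun α => ({L, α} : Finset _)) := by
    ext T
    rw [Finset.mem_union, gl_mem_pts, gl_mem_pts, Finset.mem_image]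
    constructor
    · rintro ⟨v, h0, hT, h2⟩
      rw [Finset.filter_insert] at hT
      split_ifs at hT with hv
      · right
        have h3 := hgen v h0 hv
        have h4 : (A.filter fun α => eval v α = 0).card = 1 := by
          have := Finset.card_insert_le L (A.filter fun α => eval v α = 0)
          rw [← hT] at this
          omega
        obtain ⟨α, hα⟩ := Finset.card_eq_one.1 h4
        have : α ∈ A.filter fun α => eval v α = 0 := by rw [hα]; simp
        exact ⟨α, (Finset.mem_filter.1 this).1, by rw [hT, hα]⟩
      · left; exact ⟨v, h0, hT, h2⟩
    · rintro (⟨v, h0, hT, h2⟩ | ⟨α, hα, rfl⟩)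
      · refine ⟨v, h0, ?_, h2⟩
        rw [Finset.filter_insert, if_neg, hT]
        intro hv
        have := hgen v h0 hv
        rw [← hT] at this
        omega
      · obtain ⟨w, hw0, hwL, hwα⟩ := gl_exists_point hL1.2
          (hA.1 α (Finset.mem_insert_of_mem hα)).2
        have hm : α ∈ A.filter fun β => eval w β = 0 := Finset.mem_filter.2 ⟨hα, hwα⟩
        have h3 := hgen w hw0 hwL
        have h4 : (A.filter fun β => eval w β = 0) = {α} := by
          refine Finset.eq_singleton_iff_unique_mem.2 ⟨hm, fun β hβ => ?_⟩
          exact Finset.card_le_one.1 h3 β hβ α hm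
        refine ⟨w, hw0, ?_, ?_⟩
        · rw [Finset.filter_insert, if_pos hwL, h4]
        · rw [Finset.card_pair (hAL α hα).symm]
  have hdis : Disjoint (glPts A) (A.image (fun α => ({L, α} : Finset _))) := by
    rw [Finset.disjoint_left]
    intro T hT hT'
    obtain ⟨v, -, h, -⟩ := gl_mem_pts.1 hT
    obtain ⟨α, -, h'⟩ := Finset.mem_image.1 hT'
    have : L ∈ T := by rw [← h']; simp
    rw [h] at this
    exact hL (Finset.mem_filter.1 this).1
  rw [gl_tjurina, gl_tjurina, key, Finset.sum_union hdis, Finset.sum_image]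
  · congr 1
    rw [Finset.sum_congr rfl (g := fun _ => 1)]
    · simp
    · intro α hα
      rw [Finset.card_pair (hAL α hα).symm]
      norm_num
  · intro α hα β hβ hab
    have : α ∈ ({L, β} : Finset (MvPolynomial (Fin 3) K)) := by
      have h' : ({L, α} : Finset (MvPolynomial (Fin 3) K)) = {L, β} := hab
      rw [← h']; simp
    simpa [hAL α hα] using this

end GenericLineHelpers

/-- Let `A'` be an essential line arrangement of `d' ≥ 2` lines in `P^2`
and let `L` be a generic line, i.e. a line not in `A'` passing through no intersection
point of `A'` (so `L` meets the lines of `A'` in `d'` distinct points).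
Set `A = A' ∪ {L}`. Then `τ(A) = τ(A') + d'` and `r(A) = r(A') + 1`. -/
theorem generic_line_addition (A' : Finset (MvPolynomial (Fin 3) K))
    (hA' : IsArrangement A') (hA'ess : IsEssential A') (hd : 2 ≤ A'.card)
    (L : MvPolynomial (Fin 3) K) (hL : L ∉ A')
    (hA : IsArrangement (insert L A'))
    (hgen : ∀ w : Fin 3 → K, w ≠ 0 → eval w L = 0 →
      (A'.filter fun α => eval w α = 0).card ≤ 1) :
    tjurina (insert L A') = tjurina A' + A'.card ∧
    mdr (insert L A') = mdr A' + 1 := by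
  exact ⟨gl_tau L hL hA hgen, gl_mdr hA' hd L hL hA hgen⟩
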